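/- For every τ in the upper half-plane, ε2(-1/τ) = τ^4 ε1(τ). -/

import Mathlib

open Complex Real

/-- The nome `q = e^{2πiτ}`. -/
noncomputable def qq (τ : ℂ) : ℂ := Complex.exp (2 * π * Complex.I * τ)

/-- The half-nome `q^{1/2} = e^{πiτ}`. -/
noncomputable def qh (τ : ℂ) : ℂ := Complex.exp (π * Complex.I * τ)

/-- The Jacobi theta constant `θ₁(0,τ) = 2 q^{1/8} ∏_{j≥1} (1-q^j)(1+q^j)^2`. -/
noncomputable def theta1 (τ : ℂ) : ℂ :=
  2 * Complex.exp (π * Complex.I * τ / 4) *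
    ∏' j : ℕ, ((1 - qq τ ^ (j + 1)) * (1 + qq τ ^ (j + 1)) ^ 2)

/-- The Jacobi theta constant `θ₂(0,τ) = ∏_{j≥1} (1-q^j)(1-q^{j-1/2})^2`. -/
noncomputable def theta2 (τ : ℂ) : ℂ :=
  ∏' j : ℕ, ((1 - qq τ ^ (j + 1)) * (1 - qh τ ^ (2 * j + 1)) ^ 2)

/-- The Jacobi theta constant `θ₃(0,τ) = ∏_{j≥1} (1-q^j)(1+q^{j-1/2})^2`. -/
noncomputable def theta3 (τ : ℂ) : ℂ :=
  ∏' j : ℕ, ((1 - qq τ ^ (j + 1)) * (1 + qh τ ^ (2 * j + 1)) ^ 2)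

/-- `ε₁(τ) = θ₂(0,τ)⁴ θ₃(0,τ)⁴/16`. -/
noncomputable def epsilon1 (τ : ℂ) : ℂ := theta2 τ ^ 4 * theta3 τ ^ 4 / 16

/-- `ε₂(τ) = θ₁(0,τ)⁴ θ₃(0,τ)⁴/16`. -/
noncomputable def epsilon2 (τ : ℂ) : ℂ := theta1 τ ^ 4 * theta3 τ ^ 4 / 16

/-- The Euler product. -/
noncomputable def eulerP (x : ℂ) : ℂ := ∏' n : ℕ, (1 - x ^ (n + 1))

lemma aux_mult_pow {x : ℂ} (hx : ‖x‖ < 1) (c : ℂ) (g : ℕ → ℕ) (hg : Function.Injective g) :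
    Multipliable fun n : ℕ => 1 + c * x ^ (g n) := by
  apply multipliable_one_add_of_summable (f := fun n => c * x ^ (g n))
  have h := (summable_geometric_of_lt_one (norm_nonneg x) hx).comp_injective hg
  simpa [Function.comp_def] using h.mul_left ‖c‖

lemma aux_sub {x : ℂ} (hx : ‖x‖ < 1) (g : ℕ → ℕ) (hg : Function.Injective g) :
    Multipliable fun n : ℕ => 1 - x ^ (g n) := by
  simpa [sub_eq_add_neg] using aux_mult_pow hx (-1) g hg

lemma aux_add {x : ℂ} (hx : ‖x‖ < 1) (g : ℕ → ℕ) (hg : Function.Injective g) :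
    Multipliable fun n : ℕ => 1 + x ^ (g n) := by
  simpa using aux_mult_pow hx 1 g hg

lemma inj_succ : Function.Injective (fun n : ℕ => n + 1) := fun a b h => by
  simpa using h

lemma inj_odd : Function.Injective (fun n : ℕ => 2 * n + 1) := fun a b h => by
  simpa using h

lemma inj_even : Function.Injective (fun n : ℕ => 2 * n + 2) := fun a b h => by
  simpa using h

lemma eulerP_ne_zero {x : ℂ} (hx : ‖x‖ < 1) : eulerP x ≠ 0 := by
  unfold eulerP
  simp only [sub_eq_add_neg]
  refine tprod_one_add_ne_zero_of_summable (f := fun n : ℕ => -x ^ (n + 1)) ?_ ?_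
  · intro n h
    have h1 : x ^ (n + 1) = 1 := by linear_combination -h
    have h2 : ‖x‖ ^ (n + 1) < 1 := pow_lt_one₀ (norm_nonneg _) hx (by omega)
    rw [← norm_pow, h1] at h2
    simp at h2
  · simpa using (summable_nat_add_iff 1).mpr (summable_geometric_of_lt_one (norm_nonneg _) hx)

lemma eulerP_split {x : ℂ} (hx : ‖x‖ < 1) :
    (∏' n : ℕ, (1 - x ^ (2 * n + 1))) * eulerP (x ^ 2) = eulerP x := by
  have h := tprod_even_mul_odd (f := fun n : ℕ => 1 - x ^ (n + 1))
    (aux_sub hx (fun n => 2 * n + 1) inj_odd)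
    (aux_sub hx (fun n => 2 * n + 2) inj_even)
  unfold eulerP
  rw [← h]
  congr 1
  refine tprod_congr fun n => ?_
  ring

lemma sq_lt {x : ℂ} (hx : ‖x‖ < 1) : ‖x ^ 2‖ < 1 := by
  rw [norm_pow]
  exact pow_lt_one₀ (norm_nonneg _) hx (by omega)

lemma theta23_prod {x : ℂ} (hx : ‖x‖ < 1) :
    (∏' n : ℕ, (1 - x ^ (2 * n + 1))) * (∏' n : ℕ, (1 + x ^ (2 * n + 1))) * eulerP ((x ^ 2) ^ 2)
      = eulerP (x ^ 2) := by
  rw [← eulerP_split (sq_lt hx), ← Multipliable.tprod_mul (aux_sub hx _ inj_odd)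
    (aux_add hx _ inj_odd)]
  congr 1
  refine tprod_congr fun n => ?_
  ring

lemma plus_prod {x : ℂ} (hx : ‖x‖ < 1) :
    eulerP x * (∏' n : ℕ, (1 + x ^ (n + 1))) = eulerP (x ^ 2) := by
  unfold eulerP
  rw [← Multipliable.tprod_mul (aux_sub hx _ inj_succ) (aux_add hx _ inj_succ)]
  refine tprod_congr fun n => ?_
  ring

lemma tprod_mul_sq {f g : ℕ → ℂ} (hf : Multipliable f) (hg : Multipliable g) :
    ∏' n, (f n * g n ^ 2) = (∏' n, f n) * (∏' n, g n) ^ 2 := by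
  rw [Multipliable.tprod_mul hf (hg.pow 2), hg.tprod_pow]

lemma qh_lt {τ : ℂ} (hτ : 0 < τ.im) : ‖qh τ‖ < 1 := by
  rw [qh, Complex.norm_exp, Real.exp_lt_one_iff]
  simp
  positivity

lemma qq_eq (τ : ℂ) : qq τ = qh τ ^ 2 := by
  rw [qq, qh, ← Complex.exp_nat_mul]
  congr 1
  push_cast
  ring

lemma eta_eq (τ : ℂ) : ModularForm.eta τ = Complex.exp (π * I * τ / 12) * eulerP (qh τ ^ 2) := by
  unfold ModularForm.eta eulerP
  simp only [ModularForm.eta_q_eq_pow]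
  rw [← qq_eq, qq]
  congr 1
  unfold Function.Periodic.qParam
  congr 1
  push_cast
  ring

lemma eps1_eta {τ : ℂ} (hτ : 0 < τ.im) :
    16 * epsilon1 τ * ModularForm.eta (2 * τ) ^ 8 = ModularForm.eta τ ^ 16 := by
  have hx := qh_lt hτ
  have h2 : qh (2 * τ) = qh τ ^ 2 := by
    rw [← qq_eq, qh, qq]; congr 1; ring
  rw [epsilon1, theta2, theta3, eta_eq, eta_eq, h2, qq_eq,
    tprod_mul_sq (aux_sub (sq_lt hx) _ inj_succ) (aux_sub hx _ inj_odd),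
    tprod_mul_sq (aux_sub (sq_lt hx) _ inj_succ) (aux_add hx _ inj_odd)]
  have h := theta23_prod hx
  have he : Complex.exp (π * I * (2 * τ) / 12) ^ 8 = Complex.exp (π * I * τ / 12) ^ 16 := by
    rw [← Complex.exp_nat_mul, ← Complex.exp_nat_mul]; congr 1; push_cast; ring
  change 16 * ((eulerP (qh τ ^ 2) * _) ^ 4 * (eulerP (qh τ ^ 2) * _) ^ 4 / 16) * _ = _
  rw [mul_pow _ _ 8, he, mul_pow _ _ 16]
  generalize (∏' n : ℕ, (1 - qh τ ^ (2 * n + 1))) = a at *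
  generalize (∏' n : ℕ, (1 + qh τ ^ (2 * n + 1))) = b at *
  rw [← h]
  ring

lemma eps2_eta {τ : ℂ} (hτ : 0 < τ.im) :
    epsilon2 τ * ModularForm.eta (τ / 2) ^ 8 = ModularForm.eta τ ^ 16 := by
  have hx := qh_lt hτ
  have h2 : qh (τ / 2) ^ 2 = qh τ := by
    rw [← qq_eq, qh, qq]; congr 1; ring
  rw [epsilon2, theta1, theta3, eta_eq, eta_eq, h2, qq_eq,
    tprod_mul_sq (aux_sub (sq_lt hx) _ inj_succ) (aux_add (sq_lt hx) _ inj_succ),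
    tprod_mul_sq (aux_sub (sq_lt hx) _ inj_succ) (aux_add hx _ inj_odd)]
  have h := theta23_prod hx
  have hs := eulerP_split hx
  have hp := plus_prod (sq_lt hx)
  have hC := eulerP_ne_zero (sq_lt (sq_lt hx))
  have he : Complex.exp (π * I * τ / 4) ^ 4 * Complex.exp (π * I * (τ / 2) / 12) ^ 8
      = Complex.exp (π * I * τ / 12) ^ 16 := by
    rw [← Complex.exp_nat_mul, ← Complex.exp_nat_mul, ← Complex.exp_nat_mul, ← Complex.exp_add]
    congr 1; push_cast; ring
  change (2 * _ * (eulerP (qh τ ^ 2) * _)) ^ 4 * (eulerP (qh τ ^ 2) * _) ^ 4 / 16 * _ = _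
  rw [mul_pow _ _ 16, ← he, ← hs]
  generalize (∏' n : ℕ, (1 - qh τ ^ (2 * n + 1))) = a at *
  generalize (∏' n : ℕ, (1 + qh τ ^ (2 * n + 1))) = b at *
  generalize (∏' n : ℕ, (1 + (qh τ ^ 2) ^ (n + 1))) = m at *
  generalize eulerP ((qh τ ^ 2) ^ 2) = C at *
  generalize eulerP (qh τ ^ 2) = B at *
  have key : a * b * m * B = B := by rw [mul_assoc _ m B, mul_comm m B, hp, h]
  have k8 : (a * b * m) ^ 8 * B ^ 16 = B ^ 16 := by
    calc (a * b * m) ^ 8 * B ^ 16 = (a * b * m * B) ^ 8 * B ^ 8 := by ring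
      _ = B ^ 16 := by rw [key]; ring
  linear_combination (Complex.exp (π * I * τ / 4) ^ 4 * Complex.exp (π * I * (τ / 2) / 12) ^ 8) * k8

lemma sqrt_pow8 (z : ℂ) : Complex.sqrt z ^ 8 = z ^ 4 := by
  have h : Complex.sqrt z ^ 2 = z := by
    rw [Complex.sqrt, ← Complex.cpow_nat_mul]; simp
  calc Complex.sqrt z ^ 8 = (Complex.sqrt z ^ 2) ^ 4 := by ring
    _ = z ^ 4 := by rw [h]

lemma eta_inv8 {τ : ℂ} (hτ : 0 < τ.im) :
    ModularForm.eta (-1 / τ) ^ 8 = τ ^ 4 * ModularForm.eta τ ^ 8 := by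
  have h : ModularForm.eta (-1 / τ) = (Complex.sqrt I)⁻¹ * (Complex.sqrt τ * ModularForm.eta τ) := by
    simpa using ModularForm.eta_comp_eq_csqrt_I_inv (show τ ∈ UpperHalfPlane.upperHalfPlaneSet from hτ)
  rw [h, mul_pow, mul_pow, inv_pow, sqrt_pow8, sqrt_pow8, I_pow_four]
  simp

/-- For every `τ` in the upper half-plane, `ε₂(-1/τ) = τ⁴ ε₁(τ)`. -/
theorem epsilon2_neg_inv (τ : ℂ) (hτ : 0 < τ.im) :
    epsilon2 (-1 / τ) = τ ^ 4 * epsilon1 τ := by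
  have h0 : τ ≠ 0 := by rintro rfl; simp at hτ
  have hi : 0 < (-1 / τ).im := by
    have := Complex.normSq_pos.mpr h0
    rw [neg_div, one_div, Complex.neg_im, Complex.inv_im]
    rw [neg_div, neg_neg]
    positivity
  have h2 : 0 < (2 * τ).im := by simpa using hτ
  have e2 := eps2_eta hi
  have e1 := eps1_eta hτ
  have i1 := eta_inv8 hτ
  have i2 := eta_inv8 h2
  rw [show -1 / τ / 2 = -1 / (2 * τ) by field_simp, i2,
    show ModularForm.eta (-1 / τ) ^ 16 = (ModularForm.eta (-1 / τ) ^ 8) ^ 2 by ring, i1] at e2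
  have hne : ModularForm.eta (2 * τ) ≠ 0 := ModularForm.eta_ne_zero h2
  have hne' : 16 * τ ^ 4 * ModularForm.eta (2 * τ) ^ 8 ≠ 0 :=
    mul_ne_zero (mul_ne_zero (by norm_num) (pow_ne_zero _ h0)) (pow_ne_zero _ hne)
  apply mul_right_cancel₀ hne'
  linear_combination e2 - τ ^ 8 * e1
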